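/- Let p_1 < p_2 < ... denote the sequence of all primes, let r ≥ 1 be an integer, and for n ≥ 1 let J_r(n) = ∑_{d | n} μ(n/d)·d^r be the Jordan totient of order r. Then the limit as N → ∞ of (1/N) · ∑_{i=1}^N J_r(p_i − 1)/(p_i − 1)^r exists and equals the rank-r Artin constant A_r = ∏_p (1 − 1/(p^r (p − 1))). -/

import Mathlib

open Filter

/-- The Jordan totient `J_r(n) = ∑_{d | n} μ(n/d) d^r`. -/
def jordanTotient (r n : ℕ) : ℤ :=
  ∑ d ∈ n.divisors, ArithmeticFunction.moebius (n / d) * (d : ℤ) ^ r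

/-- The rank-`r` Artin constant `A_r = ∏_p (1 - 1/(p^r (p - 1)))`, product over all primes. -/
noncomputable def artinConstantRank (r : ℕ) : ℝ :=
  ∏' p : Nat.Primes, (1 - 1 / (((p : ℕ) : ℝ) ^ r * (((p : ℕ) : ℝ) - 1)))

/-!
Since `J_r(m) / m ^ r = ∑_{d ∣ m} μ(d) / d ^ r`, the average over the first `N` primes is
`∑_d μ(d) / d ^ r` weighted by the proportion of those primes that are `≡ 1 (mod d)`. By the prime
number theorem in arithmetic progressions this proportion tends to `1 / φ(d)`, and the limiting
series `∑_d μ(d) / (d ^ r φ(d))` is the Euler product `A_r`.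

Exchanging limit and sum requires a bound for the proportion that is uniform in `d` and decays. The
bound `O(1 / √d)` is elementary: the product of the primes `p ≤ x` with `p ≡ 1 (mod d)` and
`p > n = ⌊x / d⌋` is prime to `n!`, while `n!` divides `d ^ n ∏_{k ≤ n} (1 + k d)`; hence that
product of primes is at most `(d (d + 1)) ^ n`.

The prime number theorem in progressions comes from the Wiener–Ikehara theorem. For a bounded `B`
with `B u * exp u` monotone, continuity of the Laplace transform of `B - c` on the closed half plane
`0 ≤ re s` and the Riemann–Lebesgue lemma show that the averages of `B` against translates of the
Fejér kernel tend to `c`; monotonicity then turns these averages into pointwise values.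
-/

open MeasureTheory Set Topology
open scoped FourierTransform

section FejerKernel

/-- The triangle function `max (1 - |t|) 0`: a compactly supported function whose Fourier transform
is the nonnegative integrable kernel `w ↦ sinc (π w) ^ 2`. -/
def tent (t : ℝ) : ℝ := max (1 - |t|) 0

lemma tent_of_one_le_abs {t : ℝ} (ht : 1 ≤ |t|) : tent t = 0 :=
  max_eq_right (by linarith)

lemma tent_of_mem_Icc {t : ℝ} (ht : t ∈ Icc 0 1) : tent t = 1 - t := by
  rw [tent, abs_of_nonneg ht.1, max_eq_left (by linarith [ht.2])]

lemma tent_neg (t : ℝ) : tent (-t) = tent t := by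
  rw [tent, tent, abs_neg]

lemma continuous_ofReal_tent : Continuous fun t => (tent t : ℂ) := by
  unfold tent
  fun_prop

lemma hasCompactSupport_ofReal_tent : HasCompactSupport fun t => (tent t : ℂ) :=
  .intro (isCompact_Icc (a := -1) (b := 1)) fun _ ht => by
    rw [tent_of_one_le_abs (not_lt.1 fun h => ht (abs_le.1 h.le)), Complex.ofReal_zero]

lemma integral_one_sub_mul_cos (a : ℝ) :
    2 * ∫ t in (0 : ℝ)..1, (1 - t) * Real.cos (a * t) = Real.sinc (a / 2) ^ 2 := by
  rcases eq_or_ne a 0 with rfl | ha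
  · simp only [zero_mul, Real.cos_zero, mul_one, zero_div, Real.sinc_zero]
    rw [intervalIntegral.integral_sub (by simp) (by simp)]
    norm_num
  have hderiv : ∀ t ∈ uIcc (0 : ℝ) 1, HasDerivAt
      (fun t => (1 - t) * (Real.sin (a * t) / a) - Real.cos (a * t) / a ^ 2)
      ((1 - t) * Real.cos (a * t)) t := by
    intro t _
    have hlin : HasDerivAt (fun t => a * t) a t := by simpa using (hasDerivAt_id t).const_mul a
    convert! (((hasDerivAt_id t).const_sub 1).mul (hlin.sin.div_const a)).sub
      (hlin.cos.div_const (a ^ 2)) using 1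
    simp only [id]
    field_simp
    ring
  have hcos : Real.cos a = 1 - 2 * Real.sin (a / 2) ^ 2 := by
    rw [← Real.cos_two_mul_eq_one_sub, mul_div_cancel₀ a two_ne_zero]
  rw [intervalIntegral.integral_eq_sub_of_hasDerivAt hderiv
    (Continuous.intervalIntegrable (by fun_prop) _ _), Real.sinc_of_ne_zero (by positivity)]
  simp only [mul_one, mul_zero, sub_self, zero_mul, sub_zero, Real.sin_zero, Real.cos_zero, hcos]
  field_simp
  ring

lemma fourier_tent (w : ℝ) :
    𝓕 (fun t => (tent t : ℂ)) w = (Real.sinc (Real.pi * w) ^ 2 : ℝ) := by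
  set f : ℝ → ℂ := fun t => Complex.exp ((-2 * Real.pi * t * w : ℝ) * Complex.I) • (tent t : ℂ)
  have hf : Integrable f := by
    have hexp : Continuous fun t : ℝ => Complex.exp ((-2 * Real.pi * t * w : ℝ) * Complex.I) := by
      fun_prop
    exact (hexp.smul continuous_ofReal_tent).integrable_of_hasCompactSupport
      hasCompactSupport_ofReal_tent.smul_left
  have hsymm (t : ℝ) :
      f t + f (-t) = ((2 * (tent |t| * Real.cos (2 * Real.pi * w * |t|)) : ℝ) : ℂ) := by
    have htent : tent |t| = tent t := by rw [tent, tent, abs_abs]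
    have hcos : Real.cos (2 * Real.pi * w * |t|) = Real.cos (2 * Real.pi * t * w) := by
      rcases abs_choice t with h | h <;> rw [h]
      · ring_nf
      · rw [← Real.cos_neg]; ring_nf
    rw [htent, hcos]
    simp only [f, tent_neg, smul_eq_mul]
    push_cast
    rw [Complex.cos]
    ring_nf
  have hdouble : 2 * ∫ t, f t = ∫ t, (f t + f (-t)) := by
    rw [integral_add hf hf.comp_neg, integral_neg_eq_self f volume, two_mul]
  have htail : ∫ t in Ioi (0 : ℝ), tent t * Real.cos (2 * Real.pi * w * t) =
      ∫ t in (0 : ℝ)..1, (1 - t) * Real.cos (2 * Real.pi * w * t) := by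
    rw [intervalIntegral.integral_of_le zero_le_one]
    refine (setIntegral_eq_of_subset_of_forall_sdiff_eq_zero measurableSet_Ioi
      (fun t ht => ht.1) fun t ht => ?_).trans
        (setIntegral_congr_fun measurableSet_Ioc fun t ht => ?_)
    · have : 1 < t := not_le.1 fun h => ht.2 ⟨ht.1, h⟩
      rw [tent_of_one_le_abs (this.le.trans (le_abs_self t)), zero_mul]
    · simp only [tent_of_mem_Icc ⟨ht.1.le, ht.2⟩]
  rw [Real.fourier_real_eq_integral_exp_smul]
  refine mul_left_cancel₀ (two_ne_zero' ℂ) (hdouble.trans ?_)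
  simp_rw [hsymm]
  rw [integral_complex_ofReal, integral_const_mul,
    integral_comp_abs (f := fun x => tent x * Real.cos (2 * Real.pi * w * x)), htail,
    integral_one_sub_mul_cos]
  norm_num
  ring_nf

lemma integrable_sinc_pi_mul_sq : Integrable fun w : ℝ => Real.sinc (Real.pi * w) ^ 2 := by
  refine (integrable_inv_one_add_sq.const_mul 2).mono'
    (by have := Real.continuous_sinc; fun_prop) (.of_forall fun w => ?_)
  rw [Real.norm_of_nonneg (sq_nonneg _), ← div_eq_mul_inv, le_div_iff₀ (by positivity), mul_add,
    mul_one, ← mul_pow]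
  have hone : Real.sinc (Real.pi * w) ^ 2 ≤ 1 :=
    (sq_le_one_iff_abs_le_one _).2 (Real.abs_sinc_le_one _)
  have hdecay : (Real.sinc (Real.pi * w) * w) ^ 2 ≤ 1 := by
    rcases eq_or_ne w 0 with rfl | hw
    · simp
    rw [Real.sinc_of_ne_zero (by positivity), div_mul_eq_mul_div, mul_div_mul_right _ _ hw, div_pow,
      div_le_one (by positivity)]
    nlinarith [Real.sin_sq_le_one (Real.pi * w), Real.pi_gt_three]
  linarith

lemma integral_sinc_pi_mul_sq : ∫ w : ℝ, Real.sinc (Real.pi * w) ^ 2 = 1 := by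
  have htransform : 𝓕 (fun t => (tent t : ℂ)) =
      fun w => ((Real.sinc (Real.pi * w) ^ 2 : ℝ) : ℂ) := funext fourier_tent
  have hinv := congrFun (continuous_ofReal_tent.fourierInv_fourier_eq
    (continuous_ofReal_tent.integrable_of_hasCompactSupport hasCompactSupport_ofReal_tent)
    (htransform ▸ integrable_sinc_pi_mul_sq.ofReal)) 0
  have hzero : tent 0 = 1 := by simp [tent]
  simp only [htransform, Real.fourierInv_eq, inner_zero_right, AddChar.map_zero_eq_one, one_smul,
    hzero] at hinv
  exact_mod_cast hinv

end FejerKernel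

section LaplaceTransform

lemma integrable_fourierChar_mul_smul {g : ℝ → ℂ} (hg : Integrable g) (v : ℝ) :
    Integrable fun t => 𝐞 (t * v) • g t := by
  simpa [mul_comm] using (VectorFourier.fourierIntegral_convergent_iff (L := innerₗ ℝ)
    Real.continuous_fourierChar continuous_inner (-v)).2 hg

lemma integral_fourier_mul_eq_integral_mul_fourier_sub {f g : ℝ → ℂ} (hf : Integrable f)
    (hg : Integrable g) (v : ℝ) :
    ∫ t, 𝓕 f t * (𝐞 (t * v) • g t) = ∫ u, f u * 𝓕 g (u - v) := by
  have hshift (u : ℝ) : 𝓕 (fun t => 𝐞 (t * v) • g t) u = 𝓕 g (u - v) := by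
    simp_rw [Real.fourier_real_eq, smul_smul, ← AddChar.map_add_eq_mul]
    congr! 4
    ring
  simp_rw [← hshift]
  simpa using! VectorFourier.integral_fourierIntegral_smul_eq_flip (L := innerₗ ℝ)
    Real.continuous_fourierChar continuous_inner hf
    (integrable_fourierChar_mul_smul hg v)

variable {β g : ℝ → ℂ} {M : ℝ} {H : ℂ → ℂ}

lemma integral_laplace_mul_eq_integral_mul_exp_mul_fourier_sub (hβ : AEStronglyMeasurable β)
    (hM : ∀ u, ‖β u‖ ≤ M) (hlap : ∀ s : ℂ, 0 < s.re →
      ∫ u in Ioi (0 : ℝ), β u * Complex.exp (-(s * u)) = H s)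
    (hg : Integrable g) {ε : ℝ} (hε : 0 < ε) (v : ℝ) :
    ∫ t : ℝ, H (ε + 2 * Real.pi * t * Complex.I) * (𝐞 (t * v) • g t) =
      ∫ u in Ioi (0 : ℝ), β u * Real.exp (-ε * u) * 𝓕 g (u - v) := by
  have hdamp : IntegrableOn (fun u : ℝ => β u * Real.exp (-ε * u)) (Ioi 0) :=
    (exp_neg_integrableOn_Ioi 0 hε).ofReal.bdd_mul hβ.restrict (.of_forall hM)
  have htransform (t : ℝ) : 𝓕 ((Ioi (0 : ℝ)).indicator fun u => β u * Real.exp (-ε * u)) t =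
      H (ε + 2 * Real.pi * t * Complex.I) := by
    rw [Real.fourier_real_eq_integral_exp_smul, ← hlap _ (by simpa using hε),
      ← integral_indicator measurableSet_Ioi]
    congr 1 with u
    by_cases hu : u ∈ Ioi (0 : ℝ)
    · rw [indicator_of_mem hu, indicator_of_mem hu, smul_eq_mul, mul_left_comm, Complex.ofReal_exp,
        ← Complex.exp_add]
      push_cast
      ring_nf
    · rw [indicator_of_notMem hu, indicator_of_notMem hu, smul_zero]
  simp_rw [← htransform]
  rw [integral_fourier_mul_eq_integral_mul_fourier_sub
    (hdamp.integrable_indicator measurableSet_Ioi) hg, ← integral_indicator measurableSet_Ioi]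
  simp_rw [indicator_mul_left]

lemma tendsto_integral_mul_exp_neg_mul (hβ : AEStronglyMeasurable β) (hM : ∀ u, ‖β u‖ ≤ M)
    {k : ℝ → ℂ} (hk : Integrable k) :
    Tendsto (fun ε : ℝ => ∫ u in Ioi (0 : ℝ), β u * Real.exp (-ε * u) * k u) (𝓝[>] 0)
      (𝓝 (∫ u in Ioi (0 : ℝ), β u * k u)) := by
  refine tendsto_integral_filter_of_dominated_convergence (fun u => M * ‖k u‖)
    (.of_forall fun ε => (hβ.mul (by fun_prop)).restrict.mul hk.1.restrict) ?_
    (hk.norm.const_mul M).restrict (.of_forall fun u => ?_)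
  · filter_upwards [self_mem_nhdsWithin] with ε hε
    filter_upwards [ae_restrict_mem measurableSet_Ioi] with u hu
    have hexp : Real.exp (-ε * u) ≤ 1 :=
      Real.exp_le_one_iff.2 (by nlinarith [mul_pos (mem_Ioi.1 hε) (mem_Ioi.1 hu)])
    rw [norm_mul, norm_mul, Complex.norm_real, Real.norm_of_nonneg (Real.exp_nonneg _)]
    gcongr
    exact (mul_le_of_le_one_right (norm_nonneg _) hexp).trans (hM u)
  · have hlim : ContinuousAt (fun ε : ℝ => β u * Real.exp (-ε * u) * k u) 0 := by fun_prop
    simpa using hlim.tendsto.mono_left nhdsWithin_le_nhds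

lemma tendsto_integral_vertical_line_mul (hH : ContinuousOn H {s | 0 ≤ s.re})
    (hg : Integrable g) (hsupp : HasCompactSupport g) :
    Tendsto (fun ε : ℝ => ∫ t : ℝ, H (ε + 2 * Real.pi * t * Complex.I) * g t) (𝓝[>] 0)
      (𝓝 (∫ t : ℝ, H (2 * Real.pi * t * Complex.I) * g t)) := by
  have hline (ε : ℝ) (hε : 0 ≤ ε) :
      Continuous fun t : ℝ => H (ε + 2 * Real.pi * t * Complex.I) :=
    hH.comp_continuous (by fun_prop) fun t => by simpa using hε
  have hcompact := (isCompact_Icc (a := (0 : ℝ)) (b := 1)).prod hsupp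
  obtain ⟨C, hC⟩ := hcompact.exists_bound_of_continuousOn
    (f := fun z : ℝ × ℝ => H (z.1 + 2 * Real.pi * z.2 * Complex.I))
    (hH.comp (by fun_prop) fun z hz => by simpa using hz.1.1)
  refine tendsto_integral_filter_of_dominated_convergence (fun t => C * ‖g t‖) ?_ ?_
    (hg.norm.const_mul C) (.of_forall fun t => .mul_const _ ?_)
  · filter_upwards [self_mem_nhdsWithin] with ε hε
    exact (hline ε (le_of_lt hε)).aestronglyMeasurable.mul hg.1
  · filter_upwards [Ioo_mem_nhdsGT zero_lt_one] with ε hε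
    refine .of_forall fun t => ?_
    rw [norm_mul]
    by_cases ht : t ∈ tsupport g
    · exact mul_le_mul_of_nonneg_right (hC (ε, t) ⟨Ioo_subset_Icc_self hε, ht⟩) (norm_nonneg _)
    · simp [image_eq_zero_of_notMem_tsupport ht]
  · refine (hH (2 * Real.pi * t * Complex.I) (by simp)).tendsto.comp
      (tendsto_nhdsWithin_iff.2 ⟨?_, ?_⟩)
    · have hlim : ContinuousAt (fun ε : ℝ => (ε + 2 * Real.pi * t * Complex.I : ℂ)) 0 := by fun_prop
      simpa using hlim.tendsto.mono_left nhdsWithin_le_nhds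
    · filter_upwards [self_mem_nhdsWithin] with ε hε
      simpa using (mem_Ioi.1 hε).le

lemma integral_boundary_mul_eq_integral_mul_fourier_sub (hβ : AEStronglyMeasurable β)
    (hM : ∀ u, ‖β u‖ ≤ M) (hH : ContinuousOn H {s | 0 ≤ s.re})
    (hlap : ∀ s : ℂ, 0 < s.re → ∫ u in Ioi (0 : ℝ), β u * Complex.exp (-(s * u)) = H s)
    (hg : Integrable g) (hsupp : HasCompactSupport g) (hgF : Integrable (𝓕 g)) (v : ℝ) :
    ∫ t : ℝ, H (2 * Real.pi * t * Complex.I) * (𝐞 (t * v) • g t) =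
      ∫ u in Ioi (0 : ℝ), β u * 𝓕 g (u - v) := by
  refine tendsto_nhds_unique
    (tendsto_integral_vertical_line_mul hH (integrable_fourierChar_mul_smul hg v) hsupp.smul_left)
    ((tendsto_integral_mul_exp_neg_mul hβ hM (hgF.comp_sub_right v)).congr' ?_)
  filter_upwards [self_mem_nhdsWithin] with ε hε
  exact (integral_laplace_mul_eq_integral_mul_exp_mul_fourier_sub hβ hM hlap hg hε v).symm

lemma tendsto_setIntegral_Iic_mul_comp_sub (hβ : AEStronglyMeasurable β) (hM : ∀ u, ‖β u‖ ≤ M)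
    {k : ℝ → ℂ} (hk : Integrable k) :
    Tendsto (fun v => ∫ u in Iic (0 : ℝ), β u * k (u - v)) atTop (𝓝 0) := by
  have hshift (v : ℝ) : ∫ u in Iic (0 : ℝ), β u * k (u - v) =
      ∫ w, (Iic (-v)).indicator (fun w => β (w + v) * k w) w := by
    rw [← integral_indicator measurableSet_Iic, ← integral_add_right_eq_self _ v]
    congr 1 with w
    simp [indicator, ← le_neg_iff_add_nonpos_right]
  simp_rw [hshift]
  rw [← integral_zero ℝ ℂ]
  refine tendsto_integral_filter_of_dominated_convergence (fun w => M * ‖k w‖)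
    (.of_forall fun v => ?_) (.of_forall fun v => .of_forall fun w => ?_) (hk.norm.const_mul M)
    (.of_forall fun w => ?_)
  · exact ((hβ.comp_quasiMeasurePreserving
      (measurePreserving_add_right volume v).quasiMeasurePreserving).mul hk.1).indicator
        measurableSet_Iic
  · refine (norm_indicator_le_norm_self _ _).trans ?_
    rw [norm_mul]
    exact mul_le_mul_of_nonneg_right (hM _) (norm_nonneg _)
  · refine tendsto_const_nhds.congr' ?_
    filter_upwards [eventually_gt_atTop (-w)] with v hv
    rw [indicator_of_notMem (by simp only [mem_Iic]; linarith)]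

theorem tendsto_integral_mul_fourier_of_laplace_continuousOn (hβ : AEStronglyMeasurable β)
    (hM : ∀ u, ‖β u‖ ≤ M) (hH : ContinuousOn H {s | 0 ≤ s.re})
    (hlap : ∀ s : ℂ, 0 < s.re → ∫ u in Ioi (0 : ℝ), β u * Complex.exp (-(s * u)) = H s)
    (hg : Integrable g) (hsupp : HasCompactSupport g) (hgF : Integrable (𝓕 g)) :
    Tendsto (fun v => ∫ w, β (w + v) * 𝓕 g w) atTop (𝓝 0) := by
  have hpos : Tendsto (fun v => ∫ u in Ioi (0 : ℝ), β u * 𝓕 g (u - v)) atTop (𝓝 0) := by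
    refine ((Real.tendsto_integral_exp_smul_cocompact
      fun t : ℝ => H (2 * Real.pi * t * Complex.I) * g t).comp
        (tendsto_neg_atTop_atBot.mono_right atBot_le_cocompact)).congr fun v => ?_
    rw [← integral_boundary_mul_eq_integral_mul_fourier_sub hβ hM hH hlap hg hsupp hgF]
    simp [mul_smul_comm]
  have hsum := hpos.add (tendsto_setIntegral_Iic_mul_comp_sub hβ hM hgF)
  rw [add_zero] at hsum
  refine hsum.congr fun v => ?_
  have hint : Integrable fun u => β u * 𝓕 g (u - v) :=
    (hgF.comp_sub_right v).bdd_mul hβ (.of_forall hM)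
  rw [← compl_Ioi, integral_add_compl measurableSet_Ioi hint, ← integral_add_right_eq_self _ v]
  simp

end LaplaceTransform

section Tauberian

variable {B : ℝ → ℝ} {M : ℝ}

lemma le_mul_exp_sub_of_monotone_mul_exp (hmono : Monotone fun u => B u * Real.exp u) {u v : ℝ}
    (huv : u ≤ v) : B u ≤ B v * Real.exp (v - u) := by
  rw [Real.exp_sub, mul_div_assoc', le_div_iff₀ (Real.exp_pos u)]
  exact hmono huv

lemma measurable_of_monotone_mul_exp (hmono : Monotone fun u => B u * Real.exp u) :
    Measurable B := by
  have hprod : B = fun u => B u * Real.exp u * Real.exp (-u) := by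
    ext u
    simp [mul_assoc, ← Real.exp_add]
  rw [hprod]
  exact hmono.measurable.mul (by fun_prop)

variable {K : ℝ → ℝ}

lemma integrable_comp_affine_mul (hmono : Monotone fun u => B u * Real.exp u)
    (hnonneg : ∀ u, 0 ≤ B u) (hM : ∀ u, B u ≤ M) (hK : Integrable K) (L v : ℝ) :
    Integrable fun w => B (w / L + v) * K w :=
  hK.bdd_mul (((measurable_of_monotone_mul_exp hmono).comp (by fun_prop)).aestronglyMeasurable)
    (.of_forall fun w => by
      rw [Real.norm_of_nonneg (hnonneg _)]
      exact hM _)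

lemma mul_setIntegral_Icc_le_exp_mul_integral (hmono : Monotone fun u => B u * Real.exp u)
    (hnonneg : ∀ u, 0 ≤ B u) (hM : ∀ u, B u ≤ M) (hK : Integrable K) (hK0 : ∀ w, 0 ≤ K w)
    {L : ℝ} (hL : 0 < L) (R v : ℝ) :
    B v * ∫ w in Icc (-R) R, K w ≤
      Real.exp (2 * R / L) * ∫ w, B (w / L + (v + R / L)) * K w := by
  have hint := integrable_comp_affine_mul hmono hnonneg hM hK L (v + R / L)
  have hpoint (w : ℝ) (hw : w ∈ Icc (-R) R) :
      B v ≤ Real.exp (2 * R / L) * B (w / L + (v + R / L)) := by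
    have hlow : 0 ≤ w / L + R / L := by rw [← add_div]; exact div_nonneg (by linarith [hw.1]) hL.le
    have hhigh : w / L + R / L ≤ 2 * R / L := by rw [← add_div]; gcongr; linarith [hw.2]
    refine (le_mul_exp_sub_of_monotone_mul_exp hmono (v := w / L + (v + R / L))
      (by linarith)).trans ?_
    rw [mul_comm]
    exact mul_le_mul_of_nonneg_right (Real.exp_le_exp.2 (by linarith)) (hnonneg _)
  calc B v * ∫ w in Icc (-R) R, K w = ∫ w in Icc (-R) R, B v * K w := (integral_const_mul _ _).symm
    _ ≤ ∫ w in Icc (-R) R, Real.exp (2 * R / L) * (B (w / L + (v + R / L)) * K w) := by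
        refine setIntegral_mono_on (hK.const_mul _).integrableOn (hint.const_mul _).integrableOn
          measurableSet_Icc fun w hw => ?_
        rw [← mul_assoc]
        exact mul_le_mul_of_nonneg_right (hpoint w hw) (hK0 w)
    _ ≤ ∫ w, Real.exp (2 * R / L) * (B (w / L + (v + R / L)) * K w) :=
        setIntegral_le_integral (hint.const_mul _) (.of_forall fun w =>
          mul_nonneg (Real.exp_nonneg _) (mul_nonneg (hnonneg _) (hK0 w)))
    _ = _ := integral_const_mul _ _

lemma integral_le_exp_mul_add_mul_one_sub_setIntegral_Icc
    (hmono : Monotone fun u => B u * Real.exp u) (hnonneg : ∀ u, 0 ≤ B u) (hM : ∀ u, B u ≤ M)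
    (hK : Integrable K) (hK0 : ∀ w, 0 ≤ K w) (hK1 : ∫ w, K w = 1) {L : ℝ} (hL : 0 < L) (R v : ℝ) :
    ∫ w, B (w / L + (v - R / L)) * K w ≤
      Real.exp (2 * R / L) * B v + M * (1 - ∫ w in Icc (-R) R, K w) := by
  have hint := integrable_comp_affine_mul hmono hnonneg hM hK L (v - R / L)
  have hcompl : ∫ w in (Icc (-R) R)ᶜ, K w = 1 - ∫ w in Icc (-R) R, K w := by
    rw [← hK1, ← integral_add_compl (measurableSet_Icc (a := -R) (b := R)) hK]
    ring
  have hpoint (w : ℝ) (hw : w ∈ Icc (-R) R) :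
      B (w / L + (v - R / L)) ≤ Real.exp (2 * R / L) * B v := by
    have hlow : 0 ≤ R / L - w / L := by rw [← sub_div]; exact div_nonneg (by linarith [hw.2]) hL.le
    have hhigh : R / L - w / L ≤ 2 * R / L := by rw [← sub_div]; gcongr; linarith [hw.1]
    refine (le_mul_exp_sub_of_monotone_mul_exp hmono (v := v) (by linarith)).trans ?_
    rw [mul_comm]
    exact mul_le_mul_of_nonneg_right (Real.exp_le_exp.2 (by linarith)) (hnonneg _)
  rw [← integral_add_compl (measurableSet_Icc (a := -R) (b := R)) hint, ← hcompl,
    ← integral_const_mul]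
  refine add_le_add ?_ (setIntegral_mono hint.integrableOn (hK.const_mul M).integrableOn
    fun w => mul_le_mul_of_nonneg_right (hM _) (hK0 w))
  calc ∫ w in Icc (-R) R, B (w / L + (v - R / L)) * K w
      ≤ ∫ w in Icc (-R) R, Real.exp (2 * R / L) * B v * K w :=
        setIntegral_mono_on hint.integrableOn (hK.const_mul _).integrableOn measurableSet_Icc
          fun w hw => mul_le_mul_of_nonneg_right (hpoint w hw) (hK0 w)
    _ = Real.exp (2 * R / L) * B v * ∫ w in Icc (-R) R, K w := integral_const_mul _ _
    _ ≤ Real.exp (2 * R / L) * B v := by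
        refine mul_le_of_le_one_right (mul_nonneg (Real.exp_nonneg _) (hnonneg v)) ?_
        rw [← hK1]
        exact setIntegral_le_integral hK (.of_forall hK0)

lemma tendsto_of_tendsto_integral_comp_affine_mul (hmono : Monotone fun u => B u * Real.exp u)
    (hnonneg : ∀ u, 0 ≤ B u) (hM : ∀ u, B u ≤ M) (hK : Integrable K) (hK0 : ∀ w, 0 ≤ K w)
    (hK1 : ∫ w, K w = 1) {c : ℝ}
    (hlim : ∀ L > 0, Tendsto (fun v => ∫ w, B (w / L + v) * K w) atTop (𝓝 c)) :
    Tendsto B atTop (𝓝 c) := by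
  set m : ℝ → ℝ := fun R => ∫ w in Icc (-R) R, K w
  have hmlim : Tendsto m atTop (𝓝 1) := hK1 ▸
    (aecover_Icc tendsto_neg_atTop_atBot tendsto_id).integral_tendsto_of_countably_generated hK
  have hexp : Tendsto (fun R : ℝ => Real.exp (2 * R / R ^ 2)) atTop (𝓝 1) := by
    have hzero : Tendsto (fun R : ℝ => 2 * R⁻¹) atTop (𝓝 0) := by
      simpa using tendsto_inv_atTop_zero.const_mul (2 : ℝ)
    simpa using (hzero.congr fun R => by field_simp).rexp
  refine tendsto_order.2 ⟨fun a ha => ?_, fun a ha => ?_⟩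
  · have hR : Tendsto (fun R => (c - M * (1 - m R)) / Real.exp (2 * R / R ^ 2)) atTop (𝓝 c) := by
      simpa using! (((hmlim.const_sub 1).const_mul M).const_sub c).div hexp one_ne_zero
    obtain ⟨R, hRa, hR0⟩ := ((hR.eventually_const_lt ha).and (eventually_gt_atTop 0)).exists
    have hF := (hlim (R ^ 2) (by positivity)).comp
      (tendsto_atTop_add_const_right _ (-(R / R ^ 2)) tendsto_id)
    filter_upwards [((hF.sub_const (M * (1 - m R))).div_const _).eventually_const_lt hRa] with v hv
    refine hv.trans_le ((div_le_iff₀' (Real.exp_pos _)).2 (sub_le_iff_le_add.2 ?_))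
    exact integral_le_exp_mul_add_mul_one_sub_setIntegral_Icc hmono hnonneg hM hK hK0 hK1
      (by positivity) R v
  · have hR : Tendsto (fun R => Real.exp (2 * R / R ^ 2) * c / m R) atTop (𝓝 c) := by
      simpa using! (hexp.mul_const c).div hmlim one_ne_zero
    obtain ⟨R, hRa, hR0, hmpos⟩ := ((hR.eventually_lt_const ha).and
      ((eventually_gt_atTop 0).and (hmlim.eventually_const_lt one_pos))).exists
    have hF := (hlim (R ^ 2) (by positivity)).comp
      (tendsto_atTop_add_const_right _ (R / R ^ 2) tendsto_id)
    filter_upwards [((hF.const_mul (Real.exp (2 * R / R ^ 2))).div_const (m R)).eventually_lt_const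
      hRa] with v hv
    refine ((le_div_iff₀ hmpos).2 ?_).trans_lt hv
    exact mul_setIntegral_Icc_le_exp_mul_integral hmono hnonneg hM hK hK0 (by positivity) R v

lemma tendsto_integral_comp_affine_mul_sinc_sq {β : ℝ → ℝ} (hβ : Measurable β)
    (hM : ∀ u, |β u| ≤ M) {H : ℂ → ℂ} (hH : ContinuousOn H {s | 0 ≤ s.re})
    (hlap : ∀ s : ℂ, 0 < s.re → ∫ u in Ioi (0 : ℝ), (β u : ℂ) * Complex.exp (-(s * u)) = H s)
    {L : ℝ} (hL : 0 < L) :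
    Tendsto (fun v => ∫ w, β (w / L + v) * Real.sinc (Real.pi * w) ^ 2) atTop (𝓝 0) := by
  have hlap_scaled (s : ℂ) (hs : 0 < s.re) :
      ∫ u in Ioi (0 : ℝ), (β (u / L) : ℂ) * Complex.exp (-(s * u)) = L * H (L * s) := by
    have hsubst := integral_comp_mul_left_Ioi'
      (fun u : ℝ => (β (u / L) : ℂ) * Complex.exp (-(s * u))) 0 hL
    rw [mul_zero] at hsubst
    rw [← hsubst, ← hlap _ (by simpa using mul_pos hL hs), Complex.real_smul]
    simp only [mul_div_cancel_left₀ _ hL.ne', Complex.ofReal_mul, mul_assoc, mul_left_comm s]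
  have htransform : 𝓕 (fun t => (tent t : ℂ)) =
      fun w => ((Real.sinc (Real.pi * w) ^ 2 : ℝ) : ℂ) := funext fourier_tent
  have hscaled := tendsto_integral_mul_fourier_of_laplace_continuousOn
    (β := fun u => (β (u / L) : ℂ)) (H := fun s => L * H (L * s))
    (Complex.measurable_ofReal.comp (hβ.comp (by fun_prop))).aestronglyMeasurable
    (fun u => (Complex.norm_real _).trans_le (hM _))
    (.mul (by fun_prop) (hH.comp (by fun_prop) fun s hs => by simpa using mul_nonneg hL.le hs))
    hlap_scaled
    (continuous_ofReal_tent.integrable_of_hasCompactSupport hasCompactSupport_ofReal_tent)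
    hasCompactSupport_ofReal_tent (htransform ▸ integrable_sinc_pi_mul_sq.ofReal)
  refine ((Complex.continuous_re.tendsto _).comp
    (hscaled.comp (tendsto_id.const_mul_atTop hL))).congr fun v => ?_
  simp only [Function.comp_apply, htransform, ← Complex.ofReal_mul, integral_complex_ofReal,
    Complex.ofReal_re, id, add_div, mul_div_cancel_left₀ v hL.ne']

theorem tendsto_of_laplace_continuousOn (hmono : Monotone fun u => B u * Real.exp u)
    (hnonneg : ∀ u, 0 ≤ B u) (hM : ∀ u, B u ≤ M) {c : ℝ} {H : ℂ → ℂ}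
    (hH : ContinuousOn H {s | 0 ≤ s.re})
    (hlap : ∀ s : ℂ, 0 < s.re →
      ∫ u in Ioi (0 : ℝ), ((B u - c : ℝ) : ℂ) * Complex.exp (-(s * u)) = H s) :
    Tendsto B atTop (𝓝 c) := by
  refine tendsto_of_tendsto_integral_comp_affine_mul hmono hnonneg hM integrable_sinc_pi_mul_sq
    (fun w => sq_nonneg _) integral_sinc_pi_mul_sq fun L hL => ?_
  have hbound (u : ℝ) : |B u - c| ≤ M + |c| :=
    (abs_sub _ _).trans (add_le_add ((abs_of_nonneg (hnonneg u)).trans_le (hM u)) le_rfl)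
  have hcentred := (tendsto_integral_comp_affine_mul_sinc_sq
    ((measurable_of_monotone_mul_exp hmono).sub_const c) hbound hH hlap hL).add_const c
  rw [zero_add] at hcentred
  refine hcentred.congr fun v => ?_
  simp_rw [sub_mul]
  rw [integral_sub (integrable_comp_affine_mul hmono hnonneg hM integrable_sinc_pi_mul_sq L v)
    (integrable_sinc_pi_mul_sq.const_mul c), integral_const_mul, integral_sinc_pi_mul_sq, mul_one,
    sub_add_cancel]

end Tauberian

section WienerIkehara

/-- The summatory function `x ↦ ∑_{1 ≤ k ≤ x} f k` of an arithmetic function. -/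
noncomputable def summatory (f : ℕ → ℝ) (x : ℝ) : ℝ := ∑ k ∈ Finset.Icc 1 ⌊x⌋₊, f k

variable {f : ℕ → ℝ}

lemma summatory_natCast (f : ℕ → ℝ) (n : ℕ) : summatory f n = ∑ k ∈ Finset.Icc 1 n, f k := by
  rw [summatory, Nat.floor_natCast]

lemma summatory_nonneg (hf : ∀ n, 0 ≤ f n) (x : ℝ) : 0 ≤ summatory f x :=
  Finset.sum_nonneg fun k _ => hf k

lemma monotone_summatory (hf : ∀ n, 0 ≤ f n) : Monotone (summatory f) := fun _ _ hxy =>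
  Finset.sum_le_sum_of_subset_of_nonneg (Finset.Icc_subset_Icc_right (Nat.floor_mono hxy))
    fun k _ _ => hf k

lemma exists_summatory_le_mul
    (hO : (fun n => ∑ k ∈ Finset.Icc 1 n, f k) =O[atTop] fun n => (n : ℝ)) :
    ∃ C, ∀ x, 0 ≤ x → summatory f x ≤ C * x := by
  obtain ⟨C, hC, hbound⟩ := Asymptotics.bound_of_isBigO_nat_atTop hO
  refine ⟨C, fun x hx => ?_⟩
  rcases eq_or_ne ⌊x⌋₊ 0 with h | h
  · simpa [summatory, h] using mul_nonneg hC.le hx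
  calc summatory f x ≤ C * ⌊x⌋₊ := by
        simpa [summatory] using (le_abs_self _).trans (hbound (Nat.cast_ne_zero.2 h))
    _ ≤ C * x := by gcongr; exact Nat.floor_le hx

lemma add_one_ne_zero_of_re_nonneg {s : ℂ} (hs : 0 ≤ s.re) : s + 1 ≠ 0 := fun h => by
  have := congrArg Complex.re h
  simp only [Complex.add_re, Complex.one_re, Complex.zero_re] at this
  linarith

lemma integral_summatory_exp_eq_LSeries_div (hf : ∀ n, 0 ≤ f n)
    (hO : (fun n => ∑ k ∈ Finset.Icc 1 n, f k) =O[atTop] fun n => (n : ℝ)) {s : ℂ} (hs : 0 < s.re) :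
    ∫ u in Ioi (0 : ℝ),
        ((summatory f (Real.exp u) * Real.exp (-u) : ℝ) : ℂ) * Complex.exp (-(s * u)) =
      LSeries (fun n => f n) (s + 1) / (s + 1) := by
  rw [LSeries_eq_mul_integral_of_nonneg f zero_le_one (by simpa using hs) (by simpa using hO) hf,
    mul_div_cancel_left₀ _ (add_one_ne_zero_of_re_nonneg hs.le), ← Real.exp_zero,
    ← integral_comp_exp_Ioi]
  congr 1 with u
  have hpow : Complex.exp u * (Real.exp u : ℂ) ^ (-(s + 1 + 1)) =
      Complex.exp (-u) * Complex.exp (-(s * u)) := by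
    rw [Complex.cpow_def_of_ne_zero (by exact_mod_cast (Real.exp_pos u).ne'),
      ← Complex.ofReal_log (Real.exp_pos u).le, Real.log_exp, ← Complex.exp_add, ← Complex.exp_add]
    ring_nf
  simp only [summatory, Complex.real_smul]
  push_cast at hpow ⊢
  rw [mul_left_comm, hpow, mul_assoc]

/-- The Wiener–Ikehara theorem. -/
theorem tendsto_sum_div_of_LSeries_sub_pole_continuousOn (hf : ∀ n, 0 ≤ f n)
    (hO : (fun n => ∑ k ∈ Finset.Icc 1 n, f k) =O[atTop] fun n => (n : ℝ)) {c : ℝ} {G : ℂ → ℂ}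
    (hG : ContinuousOn G {s | 1 ≤ s.re})
    (hGL : EqOn G (fun s => LSeries (fun n => f n) s - c / (s - 1)) {s | 1 < s.re}) :
    Tendsto (fun n : ℕ => (∑ k ∈ Finset.Icc 1 n, f k) / n) atTop (𝓝 c) := by
  obtain ⟨C, hC⟩ := exists_summatory_le_mul hO
  set B : ℝ → ℝ := fun u => summatory f (Real.exp u) * Real.exp (-u) with hB
  have hBexp : (fun u => B u * Real.exp u) = fun u => summatory f (Real.exp u) := by
    ext u
    simp [hB, mul_assoc, ← Real.exp_add]
  have hBmono : Monotone fun u => B u * Real.exp u :=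
    hBexp ▸ (monotone_summatory hf).comp Real.exp_monotone
  have hBnonneg (u : ℝ) : 0 ≤ B u := mul_nonneg (summatory_nonneg hf _) (Real.exp_nonneg _)
  have hBC (u : ℝ) : B u ≤ C := by
    calc B u ≤ C * Real.exp u * Real.exp (-u) :=
          mul_le_mul_of_nonneg_right (hC _ (Real.exp_nonneg u)) (Real.exp_nonneg _)
      _ = C := by rw [mul_assoc, ← Real.exp_add, add_neg_cancel, Real.exp_zero, mul_one]
  have hlim : Tendsto B atTop (𝓝 c) := by
    refine tendsto_of_laplace_continuousOn hBmono hBnonneg hBC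
      (H := fun s => (G (s + 1) - c) / (s + 1))
      (((hG.comp (by fun_prop) fun s hs => by simpa using hs).sub continuousOn_const).div
        (by fun_prop) fun s hs => add_one_ne_zero_of_re_nonneg hs) fun s hs => ?_
    have hs0 : s ≠ 0 := fun h => by simp [h] at hs
    have hexp : IntegrableOn (fun u : ℝ => Complex.exp (-s * u)) (Ioi 0) :=
      integrableOn_exp_mul_complex_Ioi (by simpa using hs) 0
    have hBexp : IntegrableOn (fun u : ℝ => (B u : ℂ) * Complex.exp (-s * u)) (Ioi 0) :=
      hexp.bdd_mul (c := C) (Complex.measurable_ofReal.comp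
        (measurable_of_monotone_mul_exp hBmono)).aestronglyMeasurable
        (.of_forall fun u => by
          rw [Complex.norm_real, Real.norm_of_nonneg (hBnonneg u)]
          exact hBC u)
    have hlap := integral_summatory_exp_eq_LSeries_div hf hO hs
    simp only [← neg_mul] at hlap
    simp_rw [Complex.ofReal_sub, sub_mul, ← neg_mul]
    rw [integral_sub hBexp (hexp.const_mul _), integral_const_mul,
      integral_exp_mul_complex_Ioi (by simpa using hs), hGL (by simpa using hs), hlap]
    have := add_one_ne_zero_of_re_nonneg hs.le
    simp only [add_sub_cancel_right, Complex.ofReal_zero, mul_zero, Complex.exp_zero]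
    field_simp
    ring
  refine (hlim.comp (Real.tendsto_log_atTop.comp tendsto_natCast_atTop_atTop)).congr' ?_
  filter_upwards [eventually_gt_atTop 0] with n hn
  have hn' : (0 : ℝ) < n := Nat.cast_pos.2 hn
  simp only [hB, Function.comp_apply, Real.exp_neg, Real.exp_log hn', summatory_natCast,
    div_eq_mul_inv]

end WienerIkehara

section PrimesInProgressions

open ArithmeticFunction ArithmeticFunction.vonMangoldt

variable {q : ℕ}

/-- The set of primes `p ≤ n` with `p ≡ a (mod q)`. -/
def primesLEMod (n : ℕ) (a : ZMod q) : Finset ℕ := {p ∈ n.primesLE | (p : ZMod q) = a}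

lemma mem_primesLEMod {n p : ℕ} {a : ZMod q} :
    p ∈ primesLEMod n a ↔ p ≤ n ∧ p.Prime ∧ (p : ZMod q) = a := by
  rw [primesLEMod, Finset.mem_filter, Nat.mem_primesLE, and_assoc]

lemma isBigO_sum_residueClass (a : ZMod q) :
    (fun n => ∑ k ∈ Finset.Icc 1 n, residueClass a k) =O[atTop] fun n => (n : ℝ) := by
  refine .of_bound (Real.log 4 + 4) (.of_forall fun n => ?_)
  rw [Real.norm_of_nonneg (Finset.sum_nonneg fun k _ => residueClass_nonneg a k),
    Real.norm_of_nonneg n.cast_nonneg]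
  refine le_trans (Finset.sum_le_sum fun k _ => residueClass_le a k) ?_
  simpa [Chebyshev.psi] using! Chebyshev.psi_le_const_mul_self n.cast_nonneg

lemma tendsto_sum_residueClass_div [NeZero q] {a : ZMod q} (ha : IsUnit a) :
    Tendsto (fun n : ℕ => (∑ k ∈ Finset.Icc 1 n, residueClass a k) / n) atTop
      (𝓝 (q.totient : ℝ)⁻¹) :=
  tendsto_sum_div_of_LSeries_sub_pole_continuousOn (residueClass_nonneg a)
    (isBigO_sum_residueClass a) (continuousOn_LFunctionResidueClassAux a)
    fun s hs => by simpa using eqOn_LFunctionResidueClassAux ha hs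

lemma sum_residueClass_sub_sum_log_primesLEMod (n : ℕ) (a : ZMod q) :
    ∑ k ∈ Finset.Icc 1 n, residueClass a k - ∑ p ∈ primesLEMod n a, Real.log p =
      ∑ k ∈ Finset.Icc 1 n with ¬ k.Prime, residueClass a k := by
  rw [← Finset.sum_filter_add_sum_filter_not _ Nat.Prime, ← Nat.primesLE_eq_filter_Icc_one,
    primesLEMod, Finset.sum_filter (fun p : ℕ => (p : ZMod q) = a), add_sub_right_comm,
    add_eq_right, sub_eq_zero]
  refine Finset.sum_congr rfl fun p hp => ?_
  simp only [residueClass, indicator_apply, mem_ofPred_eq,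
    vonMangoldt_apply_prime (Nat.prime_of_mem_primesLE hp)]

lemma tendsto_sum_log_primesLEMod_div [NeZero q] {a : ZMod q} (ha : IsUnit a) :
    Tendsto (fun n : ℕ => (∑ p ∈ primesLEMod n a, Real.log p) / n) atTop
      (𝓝 (q.totient : ℝ)⁻¹) := by
  have hsqrt : Real.sqrt =o[atTop] fun x => x :=
    Asymptotics.isLittleO_of_tendsto (by simp)
      (by simpa [Real.sqrt_div_self] using! tendsto_inv_atTop_zero.comp Real.tendsto_sqrt_atTop)
  have hψθ : Tendsto (fun n : ℕ => (Chebyshev.psi n - Chebyshev.theta n) / n) atTop (𝓝 0) :=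
    ((Chebyshev.isBigO_psi_sub_theta_sqrt.trans_isLittleO hsqrt).comp_tendsto
      tendsto_natCast_atTop_atTop).tendsto_div_nhds_zero
  have hdiff : Tendsto (fun n : ℕ => (∑ k ∈ Finset.Icc 1 n, residueClass a k -
      ∑ p ∈ primesLEMod n a, Real.log p) / n) atTop (𝓝 0) := by
    refine squeeze_zero (fun n => ?_) (fun n => ?_) hψθ <;>
      rw [sum_residueClass_sub_sum_log_primesLEMod]
    · exact div_nonneg (Finset.sum_nonneg fun k _ => residueClass_nonneg a k) n.cast_nonneg
    · rw [Chebyshev.psi_sub_theta_eq_sum_not_prime, Nat.floor_natCast]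
      gcongr ?_ / _
      exact Finset.sum_le_sum fun k _ => residueClass_le a k
  simpa [sub_div] using (tendsto_sum_residueClass_div ha).sub hdiff

lemma tendsto_primeCounting_mul_log_sub_theta_div :
    Tendsto (fun n : ℕ => (n.primeCounting * Real.log n - Chebyshev.theta n) / n) atTop (𝓝 0) := by
  have hbig := Chebyshev.primeCounting_sub_theta_div_log_isBigO.mul
    (Asymptotics.isBigO_refl Real.log atTop)
  have hlittle : (fun x : ℝ => x / Real.log x ^ 2 * Real.log x) =o[atTop] fun x => x := by
    refine Asymptotics.isLittleO_of_tendsto (by simp) ?_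
    refine (tendsto_inv_atTop_zero.comp Real.tendsto_log_atTop).congr' ?_
    filter_upwards [eventually_gt_atTop 1] with x hx
    have := Real.log_pos hx
    simp only [Function.comp_apply]
    field_simp
  refine ((hbig.trans_isLittleO hlittle).comp_tendsto
    tendsto_natCast_atTop_atTop).tendsto_div_nhds_zero.congr' ?_
  filter_upwards [eventually_gt_atTop 1] with n hn
  have : Real.log n ≠ 0 := (Real.log_pos (Nat.one_lt_cast.2 hn)).ne'
  simp only [Function.comp_apply, Nat.floor_natCast]
  field_simp

/-- The prime number theorem in arithmetic progressions. -/
theorem tendsto_card_primesLEMod_mul_log_div [NeZero q] {a : ZMod q} (ha : IsUnit a) :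
    Tendsto (fun n : ℕ => (primesLEMod n a).card * Real.log n / n) atTop
      (𝓝 (q.totient : ℝ)⁻¹) := by
  have hdiff : Tendsto (fun n : ℕ => ((primesLEMod n a).card * Real.log n -
      ∑ p ∈ primesLEMod n a, Real.log p) / n) atTop (𝓝 0) := by
    have hterm {n p : ℕ} (hp : p ∈ n.primesLE) : 0 ≤ Real.log n - Real.log p :=
      sub_nonneg.2 (Real.log_le_log (Nat.cast_pos.2 (Nat.prime_of_mem_primesLE hp).pos)
        (Nat.cast_le.2 (Nat.le_of_mem_primesLE hp)))
    refine squeeze_zero (fun n => ?_) (fun n => ?_) tendsto_primeCounting_mul_log_sub_theta_div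
    · rw [← nsmul_eq_mul, ← Finset.sum_const, ← Finset.sum_sub_distrib]
      exact div_nonneg (Finset.sum_nonneg fun p hp => hterm (Finset.filter_subset _ _ hp))
        n.cast_nonneg
    · rw [← Nat.primesLE_card_eq_primeCounting, Chebyshev.theta_eq_sum_primesLE_log,
        ← nsmul_eq_mul, ← nsmul_eq_mul, ← Finset.sum_const, ← Finset.sum_const,
        ← Finset.sum_sub_distrib, ← Finset.sum_sub_distrib]
      gcongr ?_ / _
      exact Finset.sum_le_sum_of_subset_of_nonneg (Finset.filter_subset _ _)
        fun p hp _ => hterm hp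
  simpa [← add_div] using hdiff.add (tendsto_sum_log_primesLEMod_div ha)

end PrimesInProgressions

section UpperBound

open scoped Nat

lemma dvd_prod_range_add_mul_of_coprime {m d n : ℕ} (a : ℕ) (hmd : m.Coprime d) (hmn : m ∣ n !) :
    m ∣ ∏ k ∈ Finset.range n, (a + k * d) := by
  have : NeZero m := ⟨ne_zero_of_dvd_ne_zero n.factorial_ne_zero hmn⟩
  obtain ⟨b, hb⟩ := ZMod.natCast_zmod_surjective ((a : ZMod m) * (d : ZMod m)⁻¹)
  have hbd : (b : ZMod m) * d = a := by
    rw [hb, mul_assoc, ZMod.inv_mul_of_unit _ ((ZMod.isUnit_iff_coprime d m).2 hmd.symm), mul_one]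
  have hprod : ((∏ k ∈ Finset.range n, (a + k * d) : ℕ) : ZMod m) =
      ((∏ k ∈ Finset.range n, (b + k) : ℕ) : ZMod m) * d ^ n := by
    push_cast
    simp_rw [← hbd, ← add_mul, Finset.prod_mul_distrib, Finset.prod_const, Finset.card_range]
  rw [← ZMod.natCast_eq_zero_iff, hprod, ← Nat.ascFactorial_eq_prod_range,
    (ZMod.natCast_eq_zero_iff _ m).2 (hmn.trans (Nat.factorial_dvd_ascFactorial b n)), zero_mul]

lemma factorial_dvd_pow_mul_prod_range_add_mul (a d n : ℕ) :
    n ! ∣ d ^ n * ∏ k ∈ Finset.range n, (a + k * d) := by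
  rw [Nat.dvd_iff_prime_pow_dvd_dvd]
  intro p e hp hpe
  by_cases hpd : p ∣ d
  · have : Fact p.Prime := ⟨hp⟩
    have he : e ≤ n := calc
      e ≤ padicValNat p n ! := (padicValNat_dvd_iff_le n.factorial_ne_zero).1 hpe
      _ ≤ (p - 1) * padicValNat p n ! := Nat.le_mul_of_pos_left _ hp.pred_pos
      _ ≤ n := (sub_one_mul_padicValNat_factorial n).trans_le (Nat.sub_le _ _)
    exact ((pow_dvd_pow p he).trans (pow_dvd_pow_of_dvd hpd n)).mul_right _
  · exact (dvd_prod_range_add_mul_of_coprime a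
      (((hp.coprime_iff_not_dvd).2 hpd).pow_left e) hpe).mul_left _

lemma prod_range_succ_mul_add_one (d n : ℕ) :
    ∏ k ∈ Finset.range n, ((k + 1) * (d + 1)) = n ! * (d + 1) ^ n := by
  rw [Finset.prod_mul_distrib, Finset.prod_range_add_one_eq_factorial, Finset.prod_const,
    Finset.card_range]

lemma natCast_eq_one_iff_dvd_sub_one {p d : ℕ} (hp : 1 ≤ p) : (p : ZMod d) = 1 ↔ d ∣ p - 1 := by
  rw [← ZMod.natCast_eq_zero_iff, Nat.cast_sub hp, sub_eq_zero, Nat.cast_one]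

lemma primesLEMod_one_subset (x d : ℕ) :
    primesLEMod x (1 : ZMod d) ⊆ (Finset.range (x / d)).image fun k => d + 1 + k * d := by
  intro p hp
  obtain ⟨hpx, hp, hp1⟩ := mem_primesLEMod.1 hp
  obtain ⟨k, hk⟩ := (natCast_eq_one_iff_dvd_sub_one hp.one_le).1 hp1
  obtain ⟨k, rfl⟩ : ∃ j, k = j + 1 := Nat.exists_eq_succ_of_ne_zero fun h => by
    simp only [h, mul_zero] at hk
    have := hp.two_le
    omega
  have hd : 0 < d := Nat.pos_of_ne_zero fun h => by
    simp only [h, zero_mul] at hk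
    have := hp.two_le
    omega
  have hpk : d + 1 + k * d = p := by
    have := hp.one_le
    rw [mul_add, mul_one, mul_comm d k] at hk
    omega
  refine Finset.mem_image.2 ⟨k, Finset.mem_range.2 ?_, hpk⟩
  rw [← Nat.add_one_le_iff, Nat.le_div_iff_mul_le hd, add_mul, one_mul]
  omega

lemma card_primesLEMod_one_le (x d : ℕ) : (primesLEMod x (1 : ZMod d)).card ≤ x / d :=
  (Finset.card_le_card (primesLEMod_one_subset x d)).trans
    (Finset.card_image_le.trans_eq (Finset.card_range _))

lemma prod_primesLEMod_one_le {d : ℕ} (hd : 0 < d) (x : ℕ) :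
    ∏ p ∈ primesLEMod x (1 : ZMod d) with x / d < p, p ≤ (d * (d + 1)) ^ (x / d) := by
  set n := x / d
  set S := {p ∈ primesLEMod x (1 : ZMod d) | n < p}
  have hcop : (n !).Coprime (∏ p ∈ S, p) := Nat.Coprime.prod_right fun p hp => by
    obtain ⟨hp, hnp⟩ := Finset.mem_filter.1 hp
    exact ((mem_primesLEMod.1 hp).2.1.coprime_factorial_of_lt hnp).symm
  have hinj : Set.InjOn (fun k => d + 1 + k * d) (Finset.range n) := fun a _ b _ hab =>
    Nat.eq_of_mul_eq_mul_right hd (Nat.add_left_cancel hab)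
  have hdvd : ∏ p ∈ S, p ∣ ∏ k ∈ Finset.range n, (d + 1 + k * d) := by
    rw [← Finset.prod_image (f := fun p => p) hinj]
    exact Finset.prod_dvd_prod_of_subset _ _ _
      ((Finset.filter_subset _ _).trans (primesLEMod_one_subset x d))
  refine Nat.le_of_mul_le_mul_left (c := n !) ?_ n.factorial_pos
  calc n ! * ∏ p ∈ S, p
      ≤ d ^ n * ∏ k ∈ Finset.range n, (d + 1 + k * d) :=
        Nat.le_of_dvd (by positivity) (hcop.mul_dvd_of_dvd_of_dvd
          (factorial_dvd_pow_mul_prod_range_add_mul (d + 1) d n) (hdvd.mul_left _))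
    _ ≤ d ^ n * ∏ k ∈ Finset.range n, ((k + 1) * (d + 1)) := by
        gcongr with k
        linarith
    _ = n ! * (d * (d + 1)) ^ n := by
        rw [prod_range_succ_mul_add_one, mul_pow]
        ring

lemma log_le_two_mul_sqrt {x : ℝ} (hx : 0 ≤ x) : Real.log x ≤ 2 * √x := by
  have := Real.log_le_self (Real.sqrt_nonneg x)
  rw [Real.log_sqrt hx] at this
  linarith

lemma sum_log_primesLEMod_one_le {d : ℕ} (hd : 0 < d) (x : ℕ) :
    ∑ p ∈ primesLEMod x (1 : ZMod d), Real.log p ≤ (x / d : ℕ) * Real.log (4 * (d * (d + 1))) := by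
  rw [← Finset.sum_filter_add_sum_filter_not _ (x / d < ·), add_comm,
    Real.log_mul (by simp) (by positivity), mul_add]
  refine add_le_add ?_ ?_
  · have hsub : {p ∈ primesLEMod x (1 : ZMod d) | ¬ x / d < p} ⊆ (x / d).primesLE := fun p hp => by
      obtain ⟨hp, hpn⟩ := Finset.mem_filter.1 hp
      exact Nat.mem_primesLE.2 ⟨not_lt.1 hpn, (mem_primesLEMod.1 hp).2.1⟩
    calc _ ≤ ∑ p ∈ (x / d).primesLE, Real.log p :=
          Finset.sum_le_sum_of_subset_of_nonneg hsub fun p _ _ => Real.log_natCast_nonneg p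
      _ ≤ (x / d : ℕ) * Real.log 4 := by
          rw [← Chebyshev.theta_eq_sum_primesLE_log, mul_comm]
          exact Chebyshev.theta_le_log4_mul_x (Nat.cast_nonneg _)
  · have hpos : ∀ p ∈ {p ∈ primesLEMod x (1 : ZMod d) | x / d < p}, 0 < p := fun p hp =>
      (mem_primesLEMod.1 (Finset.mem_filter.1 hp).1).2.1.pos
    rw [← Real.log_prod fun p hp => (Nat.cast_pos.2 (hpos p hp)).ne', ← Real.log_pow]
    refine Real.log_le_log (Finset.prod_pos fun p hp => Nat.cast_pos.2 (hpos p hp)) ?_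
    rw [← Nat.cast_prod]
    exact_mod_cast prod_primesLEMod_one_le hd x

lemma log_four_mul_mul_add_one_le {d : ℝ} (hd : 1 ≤ d) :
    Real.log (4 * (d * (d + 1))) ≤ 10 * √d := by
  calc Real.log (4 * (d * (d + 1))) ≤ Real.log (8 * d ^ 2) :=
        Real.log_le_log (by positivity) (by nlinarith)
    _ = 3 * Real.log 2 + 2 * Real.log d := by
        rw [Real.log_mul (by norm_num) (by positivity), Real.log_pow,
          show (8 : ℝ) = 2 ^ 3 by norm_num, Real.log_pow]
        norm_num
    _ ≤ 10 * √d := by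
        linarith [Real.log_two_lt_d9, log_le_two_mul_sqrt (zero_le_one.trans hd),
          Real.one_le_sqrt.2 hd]

lemma card_primesLEMod_one_sqrt_mul_log_le {d : ℕ} (hd : 0 < d) (x : ℕ) :
    (primesLEMod x.sqrt (1 : ZMod d)).card * Real.log x ≤ 2 * x / √d := by
  have hcard : ((primesLEMod x.sqrt (1 : ZMod d)).card : ℝ) ≤ √x / d :=
    calc ((primesLEMod x.sqrt (1 : ZMod d)).card : ℝ)
        ≤ (x.sqrt / d : ℕ) := Nat.cast_le.2 (card_primesLEMod_one_le _ d)
      _ ≤ x.sqrt / d := Nat.cast_div_le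
      _ ≤ √x / d := by gcongr; exact Real.nat_sqrt_le_real_sqrt
  calc (primesLEMod x.sqrt (1 : ZMod d)).card * Real.log x ≤ (√x / d) * (2 * √x) :=
        mul_le_mul hcard (log_le_two_mul_sqrt x.cast_nonneg) (Real.log_natCast_nonneg x)
          (by positivity)
    _ = 2 * x / d := by linear_combination 2 / (d : ℝ) * Real.mul_self_sqrt x.cast_nonneg
    _ ≤ 2 * x / √d := by
        gcongr
        exact Real.sqrt_le_self_iff.2 (.inr (Nat.one_le_cast.2 hd))

lemma card_primesLEMod_one_filter_mul_log_le {d : ℕ} (hd : 0 < d) (x : ℕ) :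
    ((primesLEMod x (1 : ZMod d)).filter (x.sqrt < ·)).card * Real.log x ≤ 20 * x / √d := by
  have hlog {p : ℕ} (hp : x.sqrt < p) : Real.log x ≤ 2 * Real.log p := by
    rcases x.eq_zero_or_pos with rfl | hx
    · simpa using mul_nonneg zero_le_two (Real.log_natCast_nonneg p)
    · rw [← Nat.cast_two, ← Real.log_pow]
      exact Real.log_le_log (Nat.cast_pos.2 hx) (mod_cast (Nat.sqrt_lt'.1 hp).le)
  calc ((primesLEMod x (1 : ZMod d)).filter (x.sqrt < ·)).card * Real.log x
      ≤ ∑ p ∈ primesLEMod x (1 : ZMod d) with x.sqrt < p, 2 * Real.log p := by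
        rw [← nsmul_eq_mul]
        exact Finset.card_nsmul_le_sum _ _ _ fun p hp => hlog (Finset.mem_filter.1 hp).2
    _ ≤ ∑ p ∈ primesLEMod x (1 : ZMod d), 2 * Real.log p :=
        Finset.sum_le_sum_of_subset_of_nonneg (Finset.filter_subset _ _) fun p _ _ =>
          mul_nonneg zero_le_two (Real.log_natCast_nonneg p)
    _ ≤ 2 * ((x / d : ℕ) * (10 * √d)) := by
        rw [← Finset.mul_sum]
        gcongr
        refine (sum_log_primesLEMod_one_le hd x).trans ?_
        gcongr
        exact log_four_mul_mul_add_one_le (Nat.one_le_cast.2 hd)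
    _ ≤ 2 * (x / d * (10 * √d)) := by
        gcongr
        exact Nat.cast_div_le
    _ = 20 * x / √d := by
        rw [div_mul_eq_mul_div, mul_div_assoc, mul_div_assoc, Real.sqrt_div_self]
        ring

lemma card_primesLEMod_one_mul_log_le {d : ℕ} (hd : 0 < d) (x : ℕ) :
    (primesLEMod x (1 : ZMod d)).card * Real.log x ≤ 22 * x / √d := by
  have hsmall : (primesLEMod x (1 : ZMod d)).filter (¬ x.sqrt < ·) ⊆
      primesLEMod x.sqrt (1 : ZMod d) := fun p hp => by
    obtain ⟨hp, hpx⟩ := Finset.mem_filter.1 hp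
    exact mem_primesLEMod.2 ⟨not_lt.1 hpx, (mem_primesLEMod.1 hp).2⟩
  calc (primesLEMod x (1 : ZMod d)).card * Real.log x
      ≤ (((primesLEMod x (1 : ZMod d)).filter (x.sqrt < ·)).card +
          (primesLEMod x.sqrt (1 : ZMod d)).card) * Real.log x := by
        rw [← Finset.card_filter_add_card_filter_not (x.sqrt < ·)]
        push_cast
        gcongr
    _ ≤ 20 * x / √d + 2 * x / √d := by
        rw [add_mul]
        exact add_le_add (card_primesLEMod_one_filter_mul_log_le hd x)
          (card_primesLEMod_one_sqrt_mul_log_le hd x)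
    _ = 22 * x / √d := by ring

end UpperBound

section PrimeAverages

lemma tendsto_primeCounting_mul_log_div :
    Tendsto (fun n : ℕ => n.primeCounting * Real.log n / n) atTop (𝓝 1) := by
  have hall (n : ℕ) : primesLEMod n (1 : ZMod 1) = n.primesLE :=
    Finset.filter_true_of_mem fun _ _ => Subsingleton.elim _ _
  simpa [hall] using tendsto_card_primesLEMod_mul_log_div (isUnit_one (M := ZMod 1))

lemma tendsto_card_primesLEMod_div_primeCounting {q : ℕ} [NeZero q] {a : ZMod q} (ha : IsUnit a) :
    Tendsto (fun n : ℕ => ((primesLEMod n a).card : ℝ) / n.primeCounting) atTop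
      (𝓝 (q.totient : ℝ)⁻¹) := by
  have hdiv := (tendsto_card_primesLEMod_mul_log_div ha).div tendsto_primeCounting_mul_log_div
    one_ne_zero
  rw [div_one] at hdiv
  refine hdiv.congr' ?_
  filter_upwards [eventually_gt_atTop 1] with n hn
  have hlog := Real.log_pos (Nat.one_lt_cast.2 hn)
  have hn0 : (0 : ℝ) < n := Nat.cast_pos.2 (zero_lt_one.trans hn)
  simp only [Pi.div_apply, mul_div_assoc _ (Real.log n),
    mul_div_mul_right _ _ (div_pos hlog hn0).ne']

lemma primesLEMod_zero_one (n : ℕ) : primesLEMod n (1 : ZMod 0) = ∅ :=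
  Finset.card_eq_zero.1
    (Nat.le_zero.1 ((card_primesLEMod_one_le n 0).trans_eq (Nat.div_zero n)))

lemma tendsto_card_primesLEMod_one_div_primeCounting (d : ℕ) :
    Tendsto (fun n : ℕ => ((primesLEMod n (1 : ZMod d)).card : ℝ) / n.primeCounting) atTop
      (𝓝 (d.totient : ℝ)⁻¹) := by
  rcases d.eq_zero_or_pos with rfl | hd
  · simp [primesLEMod_zero_one]
  · have : NeZero d := ⟨hd.ne'⟩
    exact tendsto_card_primesLEMod_div_primeCounting isUnit_one

lemma eventually_card_primesLEMod_one_div_primeCounting_le :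
    ∀ᶠ n : ℕ in atTop, ∀ d : ℕ,
      ((primesLEMod n (1 : ZMod d)).card : ℝ) / n.primeCounting ≤ 44 / √d := by
  filter_upwards [tendsto_primeCounting_mul_log_div.eventually_const_lt one_half_lt_one,
    eventually_gt_atTop 1] with n hn hn1 d
  rcases d.eq_zero_or_pos with rfl | hd
  · simp [primesLEMod_zero_one]
  have hlog := Real.log_pos (Nat.one_lt_cast.2 hn1)
  have hn0 : (0 : ℝ) < n := Nat.cast_pos.2 (zero_lt_one.trans hn1)
  have hπ : 1 / 2 * n < n.primeCounting * Real.log n := (lt_div_iff₀ hn0).1 hn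
  calc ((primesLEMod n (1 : ZMod d)).card : ℝ) / n.primeCounting
      = (primesLEMod n (1 : ZMod d)).card * Real.log n / (n.primeCounting * Real.log n) :=
        (mul_div_mul_right _ _ hlog.ne').symm
    _ ≤ (22 * n / √d) / (1 / 2 * n) :=
        div_le_div₀ (by positivity) (card_primesLEMod_one_mul_log_le hd n) (by positivity) hπ.le
    _ = 44 / √d := by
        field_simp
        norm_num

lemma inv_totient_le (d : ℕ) : (d.totient : ℝ)⁻¹ ≤ 44 / √d :=
  le_of_tendsto (tendsto_card_primesLEMod_one_div_primeCounting d)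
    (eventually_card_primesLEMod_one_div_primeCounting_le.mono fun _ hn => hn d)

lemma norm_mul_le_mul_div {x y C b : ℝ} (hy : 0 ≤ y) (hyb : y ≤ C / b) :
    ‖x * y‖ ≤ C * (|x| / b) := by
  calc ‖x * y‖ = |x| * y := by rw [norm_mul, Real.norm_eq_abs, Real.norm_of_nonneg hy]
    _ ≤ |x| * (C / b) := by gcongr
    _ = C * (|x| / b) := by ring

lemma summable_div_totient {g : ℕ → ℝ} (hg : Summable fun d : ℕ => |g d| / √d) :
    Summable fun d : ℕ => g d / d.totient :=
  (hg.mul_left 44).of_norm_bounded fun d => by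
    rw [div_eq_mul_inv]
    exact norm_mul_le_mul_div (by positivity) (inv_totient_le d)

lemma primeCounting_nth_prime_sub_one (N : ℕ) :
    (Nat.nth Nat.Prime N - 1).primeCounting = N := by
  rw [Nat.primeCounting, Nat.sub_add_cancel (Nat.prime_nth_prime N).one_le,
    Nat.primeCounting'_nth_eq]

lemma card_filter_dvd_nth_prime_sub_one (d N : ℕ) :
    ((Finset.range N).filter (d ∣ Nat.nth Nat.Prime · - 1)).card =
      (primesLEMod (Nat.nth Nat.Prime N - 1) (1 : ZMod d)).card := by
  have hmono := Nat.nth_strictMono Nat.infinite_setOfPred_prime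
  rw [← Finset.card_image_of_injective _ hmono.injective]
  congr 1
  ext p
  rw [mem_primesLEMod, Finset.mem_image, Nat.le_sub_one_iff_lt (Nat.prime_nth_prime N).pos]
  constructor
  · rintro ⟨i, hi, rfl⟩
    obtain ⟨hiN, hdvd⟩ := Finset.mem_filter.1 hi
    have hp := Nat.prime_nth_prime i
    exact ⟨hmono (Finset.mem_range.1 hiN), hp, (natCast_eq_one_iff_dvd_sub_one hp.one_le).2 hdvd⟩
  · rintro ⟨hpN, hp, hp1⟩
    obtain ⟨i, rfl⟩ : ∃ i, Nat.nth Nat.Prime i = p := ⟨_, Nat.nth_count hp⟩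
    exact ⟨i, Finset.mem_filter.2 ⟨Finset.mem_range.2 (hmono.lt_iff_lt.1 hpN),
      (natCast_eq_one_iff_dvd_sub_one hp.one_le).1 hp1⟩, rfl⟩

lemma hasSum_ite_dvd {m : ℕ} (hm : m ≠ 0) (g : ℕ → ℝ) :
    HasSum (fun d => if d ∣ m then g d else 0) (∑ d ∈ m.divisors, g d) := by
  have hdiv : ∑ d ∈ m.divisors, g d = ∑ d ∈ m.divisors, if d ∣ m then g d else 0 :=
    Finset.sum_congr rfl fun d hd => (if_pos (Nat.dvd_of_mem_divisors hd)).symm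
  rw [hdiv]
  exact hasSum_sum_of_ne_finset_zero fun d hd =>
    if_neg fun hdm => hd (Nat.mem_divisors.2 ⟨hdm, hm⟩)

lemma hasSum_mul_card_primesLEMod_div_primeCounting (g : ℕ → ℝ) (N : ℕ) :
    HasSum (fun d => g d * ((primesLEMod (Nat.nth Nat.Prime N - 1) (1 : ZMod d)).card /
        (Nat.nth Nat.Prime N - 1).primeCounting))
      ((∑ i ∈ Finset.range N, ∑ d ∈ (Nat.nth Nat.Prime i - 1).divisors, g d) / N) := by
  have hsum := (hasSum_sum fun i (_ : i ∈ Finset.range N) =>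
    hasSum_ite_dvd (Nat.sub_ne_zero_of_lt (Nat.prime_nth_prime i).one_lt) g).div_const (N : ℝ)
  refine hsum.congr_fun fun d => ?_
  rw [← Finset.sum_filter, Finset.sum_const, card_filter_dvd_nth_prime_sub_one,
    primeCounting_nth_prime_sub_one, nsmul_eq_mul]
  ring

theorem tendsto_average_sum_divisors_nth_prime_sub_one {g : ℕ → ℝ}
    (hg : Summable fun d : ℕ => |g d| / √d) :
    Tendsto (fun N : ℕ =>
        (∑ i ∈ Finset.range N, ∑ d ∈ (Nat.nth Nat.Prime i - 1).divisors, g d) / N)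
      atTop (𝓝 (∑' d, g d / d.totient)) := by
  have hnth : Tendsto (fun N => Nat.nth Nat.Prime N - 1) atTop atTop :=
    tendsto_atTop_mono (fun N => Nat.le_sub_of_add_le
      ((Nat.le_succ _).trans (Nat.add_two_le_nth_prime N))) tendsto_id
  simp_rw [← (hasSum_mul_card_primesLEMod_div_primeCounting g _).tsum_eq, div_eq_mul_inv (g _)]
  refine tendsto_tsum_of_dominated_convergence (hg.mul_left 44)
    (fun d => ((tendsto_card_primesLEMod_one_div_primeCounting d).comp hnth).const_mul _) ?_
  filter_upwards [hnth.eventually eventually_card_primesLEMod_one_div_primeCounting_le] with N hN d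
  exact norm_mul_le_mul_div (by positivity) (hN d)

end PrimeAverages

section JordanTotient

open ArithmeticFunction

lemma jordanTotient_div_pow (r : ℕ) {m : ℕ} (hm : m ≠ 0) :
    (jordanTotient r m : ℝ) / (m : ℝ) ^ r = ∑ d ∈ m.divisors, (moebius d : ℝ) / (d : ℝ) ^ r := by
  rw [← Nat.sum_div_divisors, jordanTotient, Int.cast_sum, Finset.sum_div]
  refine Finset.sum_congr rfl fun d hd => ?_
  have hd0 : (d : ℝ) ≠ 0 := Nat.cast_ne_zero.2 (Nat.pos_of_mem_divisors hd).ne'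
  have : (m : ℝ) ≠ 0 := Nat.cast_ne_zero.2 hm
  rw [Nat.cast_div (Nat.dvd_of_mem_divisors hd) hd0, div_pow]
  push_cast
  field_simp

lemma summable_moebius_div_pow_div_sqrt {r : ℕ} (hr : 1 ≤ r) :
    Summable fun d : ℕ => |(moebius d : ℝ) / (d : ℝ) ^ r| / √d := by
  refine .of_nonneg_of_le (fun d => by positivity) (fun d => ?_)
    (Real.summable_one_div_nat_rpow.2 (by norm_num : (1 : ℝ) < 3 / 2))
  rcases d.eq_zero_or_pos with rfl | hd
  · simp
  have hμ : |(moebius d : ℝ)| ≤ 1 := mod_cast abs_moebius_le_one (n := d)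
  have hd0 : (0 : ℝ) < d := Nat.cast_pos.2 hd
  calc |(moebius d : ℝ) / (d : ℝ) ^ r| / √d = |(moebius d : ℝ)| / (d ^ r * √d) := by
        rw [abs_div, abs_of_pos (pow_pos hd0 r), div_div]
    _ ≤ 1 / (d * √d) := by
        gcongr
        exact le_self_pow₀ (Nat.one_le_cast.2 hd) (Nat.one_le_iff_ne_zero.1 hr)
    _ = 1 / (d : ℝ) ^ (3 / 2 : ℝ) := by
        rw [Real.sqrt_eq_rpow, ← Real.rpow_one_add' hd0.le (by norm_num)]
        norm_num

lemma tsum_moebius_div_pow_div_totient {r : ℕ} (hr : 1 ≤ r) :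
    ∑' d : ℕ, (moebius d : ℝ) / (d : ℝ) ^ r / d.totient = artinConstantRank r := by
  rw [← EulerProduct.eulerProduct_tprod (by simp) ?_
    (summable_div_totient (summable_moebius_div_pow_div_sqrt hr)).norm (by simp), artinConstantRank]
  · refine tprod_congr fun ⟨p, hp⟩ => ?_
    rw [tsum_eq_sum (s := Finset.range 2)]
    · simp [Finset.sum_range_succ, moebius_apply_prime hp, Nat.totient_prime hp,
        Nat.cast_sub hp.one_le, div_div, neg_div, sub_eq_add_neg]
    · intro e he
      rw [Finset.mem_range] at he
      simp [moebius_apply_prime_pow hp (show e ≠ 0 by omega), show e ≠ 1 by omega]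
  · intro m n hmn
    rw [isMultiplicative_moebius.map_mul_of_coprime hmn, Nat.totient_mul hmn]
    push_cast
    rw [mul_pow, mul_div_mul_comm, mul_div_mul_comm]

end JordanTotient

/-- For every `r ≥ 1`, the average `(1/N) ∑_{i=1}^N J_r(p_i - 1)/(p_i - 1)^r` over the
first `N` primes tends to the rank-`r` Artin constant. -/
theorem artin_rank_summation_formula (r : ℕ) (hr : 1 ≤ r) :
    Tendsto (fun N : ℕ =>
        (1 / (N : ℝ)) * ∑ i ∈ Finset.range N,
          (jordanTotient r (Nat.nth Nat.Prime i - 1) : ℝ) / ((Nat.nth Nat.Prime i : ℝ) - 1) ^ r)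
      atTop (nhds (artinConstantRank r)) := by
  have hterm (i : ℕ) : (jordanTotient r (Nat.nth Nat.Prime i - 1) : ℝ) /
      ((Nat.nth Nat.Prime i : ℝ) - 1) ^ r =
        ∑ d ∈ (Nat.nth Nat.Prime i - 1).divisors,
          (ArithmeticFunction.moebius d : ℝ) / (d : ℝ) ^ r := by
    have hp := Nat.prime_nth_prime i
    rw [← jordanTotient_div_pow r (Nat.sub_ne_zero_of_lt hp.one_lt), Nat.cast_sub hp.one_le,
      Nat.cast_one]
  simp_rw [hterm, one_div_mul_eq_div]
  rw [← tsum_moebius_div_pow_div_totient hr]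
  exact tendsto_average_sum_divisors_nth_prime_sub_one (summable_moebius_div_pow_div_sqrt hr)
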